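/- Let n ≥ 1, α ∈ (0,1) and T > 0. Let b : [0,T]×ℝⁿ → ℝⁿ be bounded and measurable, and define v(t,x) := ∫₀^t ∫_{ℝⁿ} ∇_xΓ(t−τ, x−y) · b(τ,y) dy dτ (the dot denoting the Euclidean inner product). Then there is a constant C depending only on n and α such that, writing ‖b‖_∞ := sup_{(τ,y)} |b(τ,y)|: (i) |v(t,x)| ≤ C · t^{1/2} · ‖b‖_∞ for all t ∈ (0,T]; (ii) |v(t,x′) − v(t,x)| ≤ C · T^{(1−α)/2} · |x′−x|^α · ‖b‖_∞ for all t ∈ (0,T] and x, x′ ∈ ℝⁿ; (iii) |v(t′,x) − v(t,x)| ≤ C · T^{(1−α)/2} · (t′−t)^{α/2} · ‖b‖_∞ for all 0 ≤ t < t′ ≤ T. -/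

import Mathlib

open MeasureTheory
open scoped BigOperators ENNReal Topology

noncomputable section

/-- The heat kernel `Γ(t,x) = (4πt)^{-n/2} exp(-|x|²/(4t))` on `ℝⁿ`. -/
def heatKernel (n : ℕ) (t : ℝ) (x : EuclideanSpace ℝ (Fin n)) : ℝ :=
  (4 * Real.pi * t) ^ (-(n : ℝ) / 2) * Real.exp (-‖x‖ ^ 2 / (4 * t))

open scoped RealInnerProductSpace

/-!
By parabolic scaling the `L¹` norms of `∇Γ(s)`, `∇²Γ(s)` and `∂ₛ∇Γ(s)` are bounded by multiples of
`s^(-1/2)`, `s^(-1)` and `s^(-3/2)`. Hence an increment of `∇Γ(s)` by `h` in space has `L¹` norm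
`O(s^(-1/2))` trivially and `O(‖h‖ s^(-1))` by the fundamental theorem of calculus, and
interpolating the two gives `O(‖h‖^α s^(-(1+α)/2))`; in the same way an increment by `d` in time
is `O(d^(α/2) s^(-(1+α)/2))`. The exponent `-(1+α)/2` exceeds `-1`, so these bounds are integrable
up to `s = 0`. A difference of values of `v` is the Duhamel integral of `b` against an increment
of `∇Γ`, plus, for increments in time, the integral over the late times `(t, t']`, which the bound
on `∇Γ` alone controls.
-/

open Function Set

section Increments

variable {X W : Type*} [MeasurableSpace X] [NormedAddCommGroup W] [NormedSpace ℝ W]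
  [CompleteSpace W]

theorem integral_norm_sub_le_of_hasDerivAt {μ : Measure X} [SFinite μ] {φ φ' : ℝ → X → W}
    {a b C : ℝ} (hab : a ≤ b) (hφ : ∀ x, ∀ θ ∈ Icc a b, HasDerivAt (φ · x) (φ' θ x) θ)
    (hmeas : StronglyMeasurable (uncurry φ')) (hint : ∀ θ ∈ Icc a b, Integrable (φ' θ) μ)
    (hC : ∀ θ ∈ Icc a b, ∫ x, ‖φ' θ x‖ ∂μ ≤ C) :
    ∫ x, ‖φ b x - φ a x‖ ∂μ ≤ C * (b - a) := by
  have hmem : ∀ᵐ θ ∂volume.restrict (Ioc a b), θ ∈ Icc a b :=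
    (ae_restrict_mem measurableSet_Ioc).mono fun _ h => Ioc_subset_Icc_self h
  have hnorm : Integrable (fun θ => ∫ x, ‖φ' θ x‖ ∂μ) (volume.restrict (Ioc a b)) :=
    Integrable.mono' (integrable_const C)
      hmeas.norm.integral_prod_right.aestronglyMeasurable
      (hmem.mono fun θ hθ => by
        rw [Real.norm_of_nonneg (integral_nonneg fun _ => norm_nonneg _)]; exact hC θ hθ)
  have hprod : Integrable (uncurry φ') ((volume.restrict (Ioc a b)).prod μ) :=
    (integrable_prod_iff hmeas.aestronglyMeasurable).2 ⟨hmem.mono hint, hnorm⟩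
  have hftc : ∀ᵐ x ∂μ, ‖φ b x - φ a x‖ ≤ ∫ θ in Ioc a b, ‖φ' θ x‖ := by
    filter_upwards [hprod.prod_left_ae] with x hx
    have hsub : ∫ θ in a..b, φ' θ x = φ b x - φ a x :=
      intervalIntegral.integral_eq_sub_of_hasDerivAt (f := (φ · x)) (f' := (φ' · x))
        (by simpa only [uIcc_of_le hab] using hφ x)
        ((intervalIntegrable_iff_integrableOn_Ioc_of_le hab).2 hx)
    rw [← hsub, intervalIntegral.integral_of_le hab]
    exact norm_integral_le_integral_norm _
  calc ∫ x, ‖φ b x - φ a x‖ ∂μ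
      ≤ ∫ x, (∫ θ in Ioc a b, ‖φ' θ x‖) ∂μ :=
        integral_mono_of_nonneg (.of_forall fun _ => norm_nonneg _)
          hprod.integral_norm_prod_right hftc
    _ = ∫ θ in Ioc a b, ∫ x, ‖φ' θ x‖ ∂μ := (integral_integral_swap hprod.norm).symm
    _ ≤ ∫ _ in Ioc a b, C := integral_mono_ae hnorm (integrable_const C) (hmem.mono hC)
    _ = C * (b - a) := by simp [hab, mul_comm]

theorem integral_norm_comp_add_right_sub_le {E : Type*} [NormedAddCommGroup E] [NormedSpace ℝ E]
    [MeasurableSpace E] [BorelSpace E] [SecondCountableTopology E] {μ : Measure E} [SFinite μ]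
    [μ.IsAddRightInvariant] {F : E → W} {F' : E → E →L[ℝ] W} (hF : ∀ z, HasFDerivAt F (F' z) z)
    (hmeas : StronglyMeasurable F') (hint : Integrable F' μ) (h : E) :
    ∫ z, ‖F (z + h) - F z‖ ∂μ ≤ (∫ z, ‖F' z‖ ∂μ) * ‖h‖ := by
  have hline (z : E) (θ : ℝ) : HasDerivAt (fun θ => F (z + θ • h)) (F' (z + θ • h) h) θ := by
    have hmove : HasDerivAt (fun θ : ℝ => z + θ • h) h θ := by
      simpa using ((hasDerivAt_id θ).smul_const h).const_add z
    exact (hF _).comp_hasDerivAt θ hmove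
  have hint' (θ : ℝ) : Integrable (fun z => F' (z + θ • h) h) μ :=
    (hint.comp_add_right (θ • h)).apply_continuousLinearMap h
  have hle (θ : ℝ) : ∫ z, ‖F' (z + θ • h) h‖ ∂μ ≤ (∫ z, ‖F' z‖ ∂μ) * ‖h‖ := by
    rw [← integral_add_right_eq_self (fun z => ‖F' z‖) (θ • h), ← integral_mul_const]
    exact integral_mono (hint' θ).norm ((hint.comp_add_right _).norm.mul_const _)
      fun z => (F' _).le_opNorm h
  have hmeas' : StronglyMeasurable (uncurry fun (θ : ℝ) (z : E) => F' (z + θ • h) h) :=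
    (ContinuousLinearMap.apply ℝ W h).continuous.comp_stronglyMeasurable <|
      hmeas.comp_measurable (g := fun p : ℝ × E => p.2 + p.1 • h) (by fun_prop)
  simpa using integral_norm_sub_le_of_hasDerivAt zero_le_one (fun z θ _ => hline z θ) hmeas'
    (fun θ _ => hint' θ) (fun θ _ => hle θ)

end Increments

section L1

/-- `HasL1RpowBound μ K A q` says that the time slices of the kernel `K` satisfy
`‖K s‖_{L¹(μ)} ≤ A s ^ q` for all times `s > 0`. -/
structure HasL1RpowBound {X W : Type*} [MeasurableSpace X] [NormedAddCommGroup W] (μ : Measure X)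
    (K : ℝ → X → W) (A q : ℝ) : Prop where
  integrable {s : ℝ} : 0 < s → Integrable (K s) μ
  integral_norm_le {s : ℝ} : 0 < s → ∫ x, ‖K s x‖ ∂μ ≤ A * s ^ q

namespace HasL1RpowBound

variable {X W : Type*} [MeasurableSpace X] [NormedAddCommGroup W] {μ : Measure X}
  {K L : ℝ → X → W} {A B q r : ℝ}

theorem nonneg (hK : HasL1RpowBound μ K A q) : 0 ≤ A := by
  simpa using (integral_nonneg fun _ => norm_nonneg _).trans (hK.integral_norm_le one_pos)

theorem sub (hK : HasL1RpowBound μ K A q) (hL : HasL1RpowBound μ L B q) :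
    HasL1RpowBound μ (fun s x => K s x - L s x) (A + B) q where
  integrable hs := (hK.integrable hs).sub (hL.integrable hs)
  integral_norm_le {s} hs := calc
    ∫ x, ‖K s x - L s x‖ ∂μ ≤ ∫ x, (‖K s x‖ + ‖L s x‖) ∂μ :=
      integral_mono ((hK.integrable hs).sub (hL.integrable hs)).norm
        ((hK.integrable hs).norm.add (hL.integrable hs).norm) fun _ => norm_sub_le _ _
    _ = (∫ x, ‖K s x‖ ∂μ) + ∫ x, ‖L s x‖ ∂μ :=
      integral_add (hK.integrable hs).norm (hL.integrable hs).norm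
    _ ≤ A * s ^ q + B * s ^ q := add_le_add (hK.integral_norm_le hs) (hL.integral_norm_le hs)
    _ = (A + B) * s ^ q := by ring

theorem interpolate (hA : HasL1RpowBound μ K A q) (hB : HasL1RpowBound μ K B r) {θ : ℝ}
    (hθ : θ ∈ Icc (0 : ℝ) 1) :
    HasL1RpowBound μ K (A ^ (1 - θ) * B ^ θ) ((1 - θ) * q + θ * r) where
  integrable := hA.integrable
  integral_norm_le {s} hs := by
    have hI : 0 ≤ ∫ x, ‖K s x‖ ∂μ := integral_nonneg fun _ => norm_nonneg _
    have hA₀ := hA.nonneg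
    have hB₀ := hB.nonneg
    calc ∫ x, ‖K s x‖ ∂μ
        = (∫ x, ‖K s x‖ ∂μ) ^ (1 - θ) * (∫ x, ‖K s x‖ ∂μ) ^ θ := by
          rw [← Real.rpow_add_of_nonneg hI (sub_nonneg.2 hθ.2) hθ.1, sub_add_cancel, Real.rpow_one]
      _ ≤ (A * s ^ q) ^ (1 - θ) * (B * s ^ r) ^ θ := by
          gcongr
          exacts [sub_nonneg.2 hθ.2, hA.integral_norm_le hs, hθ.1, hB.integral_norm_le hs]
      _ = A ^ (1 - θ) * B ^ θ * s ^ ((1 - θ) * q + θ * r) := by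
          rw [Real.mul_rpow hA₀ (by positivity), Real.mul_rpow hB₀ (by positivity),
            ← Real.rpow_mul hs.le, ← Real.rpow_mul hs.le, Real.rpow_add hs, mul_comm q, mul_comm r]
          ring

theorem of_norm_le_comp_inv_sqrt_smul {V : Type*} [NormedAddCommGroup V] [NormedSpace ℝ V]
    [FiniteDimensional ℝ V] [MeasurableSpace V] [BorelSpace V] {μ : Measure V}
    [μ.IsAddHaarMeasure] {K : ℝ → V → W} {g : V → ℝ}
    (hg : Integrable g μ) (hmeas : ∀ {s}, 0 < s → AEStronglyMeasurable (K s) μ)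
    (hle : ∀ {s}, 0 < s → ∀ z,
      ‖K s z‖ ≤ s ^ q * ((√s ^ Module.finrank ℝ V)⁻¹ * g ((√s)⁻¹ • z))) :
    HasL1RpowBound μ K (∫ w, g w ∂μ) q := by
  have hdom {s : ℝ} (hs : 0 < s) : Integrable
      (fun z => s ^ q * ((√s ^ Module.finrank ℝ V)⁻¹ * g ((√s)⁻¹ • z))) μ :=
    ((hg.comp_smul (inv_ne_zero (Real.sqrt_pos.2 hs).ne')).const_mul _).const_mul _
  refine ⟨fun hs => (hdom hs).mono' (hmeas hs) (.of_forall (hle hs)), fun {s} hs => ?_⟩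
  have hpow : √s ^ Module.finrank ℝ V ≠ 0 := (pow_pos (Real.sqrt_pos.2 hs) _).ne'
  calc ∫ z, ‖K s z‖ ∂μ
      ≤ ∫ z, s ^ q * ((√s ^ Module.finrank ℝ V)⁻¹ * g ((√s)⁻¹ • z)) ∂μ :=
        integral_mono_of_nonneg (.of_forall fun _ => norm_nonneg _) (hdom hs)
          (.of_forall (hle hs))
    _ = (∫ w, g w ∂μ) * s ^ q := by
        rw [integral_const_mul, integral_const_mul,
          Measure.integral_comp_inv_smul_of_nonneg μ g (Real.sqrt_nonneg s), smul_eq_mul,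
          inv_mul_cancel_left₀ hpow, mul_comm]

theorem comp_add_right {G : Type*} [MeasurableSpace G] [AddGroup G] [MeasurableAdd G]
    {μ : Measure G} [μ.IsAddRightInvariant] {K : ℝ → G → W} (hK : HasL1RpowBound μ K A q) (h : G) :
    HasL1RpowBound μ (fun s x => K s (x + h)) A q where
  integrable hs := (hK.integrable hs).comp_add_right h
  integral_norm_le {s} hs := by
    rw [integral_add_right_eq_self fun x => ‖K s x‖]
    exact hK.integral_norm_le hs

theorem time_shift (hK : HasL1RpowBound μ K A q) (hq : q ≤ 0) {d : ℝ} (hd : 0 ≤ d) :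
    HasL1RpowBound μ (fun s => K (s + d)) A q where
  integrable hs := hK.integrable (add_pos_of_pos_of_nonneg hs hd)
  integral_norm_le hs := (hK.integral_norm_le (add_pos_of_pos_of_nonneg hs hd)).trans <|
    mul_le_mul_of_nonneg_left (Real.rpow_le_rpow_of_nonpos hs (le_add_of_nonneg_right hd) hq)
      hK.nonneg

theorem comp_add_right_sub_rpow [NormedSpace ℝ W] [CompleteSpace W] {E : Type*}
    [NormedAddCommGroup E] [NormedSpace ℝ E] [MeasurableSpace E] [BorelSpace E]
    [SecondCountableTopology E] {μ : Measure E} [SFinite μ] [μ.IsAddRightInvariant]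
    {K : ℝ → E → W} {DK : ℝ → E → E →L[ℝ] W} (hK : HasL1RpowBound μ K A q)
    (hDK : HasL1RpowBound μ DK B r) (hderiv : ∀ {s}, 0 < s → ∀ z, HasFDerivAt (K s) (DK s z) z)
    (hmeas : ∀ {s}, 0 < s → StronglyMeasurable (DK s)) {θ : ℝ} (hθ : θ ∈ Icc (0 : ℝ) 1) (h : E) :
    HasL1RpowBound μ (fun s z => K s (z + h) - K s z) ((2 * A) ^ (1 - θ) * B ^ θ * ‖h‖ ^ θ)
      ((1 - θ) * q + θ * r) := by
  have hsub := (hK.comp_add_right h).sub hK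
  have hlip : HasL1RpowBound μ (fun s z => K s (z + h) - K s z) (B * ‖h‖) r :=
    { integrable := hsub.integrable
      integral_norm_le := fun {s} hs => calc
        ∫ z, ‖K s (z + h) - K s z‖ ∂μ ≤ (∫ z, ‖DK s z‖ ∂μ) * ‖h‖ :=
          integral_norm_comp_add_right_sub_le (hderiv hs) (hmeas hs) (hDK.integrable hs) h
        _ ≤ B * s ^ r * ‖h‖ := by gcongr; exact hDK.integral_norm_le hs
        _ = B * ‖h‖ * s ^ r := by ring }
  rw [mul_assoc, ← Real.mul_rpow hDK.nonneg (norm_nonneg h), two_mul]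
  exact hsub.interpolate hlip hθ

theorem time_shift_sub_rpow [NormedSpace ℝ W] [CompleteSpace W] [SFinite μ] {K' : ℝ → X → W}
    (hK : HasL1RpowBound μ K A q) (hK' : HasL1RpowBound μ K' B r) (hq : q ≤ 0) (hr : r ≤ 0)
    (hderiv : ∀ {s}, 0 < s → ∀ x, HasDerivAt (K · x) (K' s x) s)
    (hmeas : StronglyMeasurable (uncurry K')) {θ : ℝ} (hθ : θ ∈ Icc (0 : ℝ) 1) {d : ℝ}
    (hd : 0 ≤ d) :
    HasL1RpowBound μ (fun s x => K (s + d) x - K s x) ((2 * A) ^ (1 - θ) * B ^ θ * d ^ θ)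
      ((1 - θ) * q + θ * r) := by
  have hsub := (hK.time_shift hq hd).sub hK
  have hlip : HasL1RpowBound μ (fun s x => K (s + d) x - K s x) (B * d) r :=
    { integrable := hsub.integrable
      integral_norm_le := fun {s} hs => calc
        ∫ x, ‖K (s + d) x - K s x‖ ∂μ ≤ B * s ^ r * (s + d - s) :=
          integral_norm_sub_le_of_hasDerivAt (le_add_of_nonneg_right hd)
            (fun x σ hσ => hderiv (hs.trans_le hσ.1) x) hmeas
            (fun σ hσ => hK'.integrable (hs.trans_le hσ.1))
            (fun σ hσ => (hK'.integral_norm_le (hs.trans_le hσ.1)).trans <|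
              mul_le_mul_of_nonneg_left (Real.rpow_le_rpow_of_nonpos hs hσ.1 hr) hK'.nonneg)
        _ = B * d * s ^ r := by ring }
  rw [mul_assoc, ← Real.mul_rpow hK'.nonneg hd, two_mul]
  exact hsub.interpolate hlip hθ

end HasL1RpowBound

end L1

section SubRpow

variable {a t q : ℝ}

theorem integrableOn_sub_rpow (hat : a ≤ t) (hq : -1 < q) :
    IntegrableOn (fun τ => (t - τ) ^ q) (Ioc a t) := by
  have h := (intervalIntegral.intervalIntegrable_rpow' (a := t - a) (b := 0) hq).comp_sub_left t
  rw [← intervalIntegrable_iff_integrableOn_Ioc_of_le hat]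
  simpa using h

theorem integral_sub_rpow (hat : a ≤ t) (hq : -1 < q) :
    ∫ τ in Ioc a t, (t - τ) ^ q = (t - a) ^ (q + 1) / (q + 1) := by
  rw [← intervalIntegral.integral_of_le hat,
    intervalIntegral.integral_comp_sub_left (fun τ => τ ^ q), integral_rpow (Or.inl hq), sub_self,
    Real.zero_rpow (by linarith), sub_zero]

end SubRpow

theorem ae_restrict_Ioc_mem_Ioo (a t : ℝ) : ∀ᵐ τ ∂volume.restrict (Ioc a t), τ ∈ Ioo a t := by
  rw [← restrict_Ioo_eq_restrict_Ioc]
  exact ae_restrict_mem measurableSet_Ioo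

section Duhamel

variable {G W : Type*} [AddCommGroup G] [NormedAddCommGroup W] [InnerProductSpace ℝ W]

theorem norm_inner_comp_sub_left_le {F β : G → W} {M : ℝ} (hM : ∀ y, ‖β y‖ ≤ M) (x y : G) :
    ‖⟪F (x - y), β y⟫‖ ≤ ‖F (x - y)‖ * M :=
  (norm_inner_le_norm _ _).trans (mul_le_mul_of_nonneg_left (hM y) (norm_nonneg _))

variable [MeasurableSpace G]

/-- The convolution `∫ F(x - y) · β(y) dμ(y)` of two vector fields, paired by the inner product. -/
def innerConvolution (μ : Measure G) (F β : G → W) (x : G) : ℝ :=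
  ∫ y, ⟪F (x - y), β y⟫ ∂μ

/-- The Duhamel potential `∫₀^t ∫ K(t - τ, x - y) · b(τ, y) dμ(y) dτ` of the source `b` with
respect to the kernel `K`. -/
def duhamel (μ : Measure G) (K b : ℝ → G → W) (t : ℝ) (x : G) : ℝ :=
  ∫ τ in Ioc 0 t, innerConvolution μ (K (t - τ)) (b τ) x

variable {μ : Measure G} {F F₁ F₂ β : G → W} {K L b : ℝ → G → W} {A B q r t d M : ℝ}

theorem duhamel_comp_add_right (K b : ℝ → G → W) (t : ℝ) (h x : G) :
    duhamel μ (fun s z => K s (z + h)) b t x = duhamel μ K b t (x + h) := by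
  simp only [duhamel, innerConvolution, sub_add_eq_add_sub]

variable [MeasurableAdd₂ G] [MeasurableNeg G]

theorem stronglyMeasurable_innerConvolution [SFinite μ] (hK : StronglyMeasurable (uncurry K))
    (hb : StronglyMeasurable (uncurry b)) (t : ℝ) (x : G) :
    StronglyMeasurable fun τ => innerConvolution μ (K (t - τ)) (b τ) x := by
  have hKtx : StronglyMeasurable fun p : ℝ × G => K (t - p.1) (x - p.2) :=
    hK.comp_measurable (g := fun p : ℝ × G => (t - p.1, x - p.2)) (by fun_prop)
  exact (hKtx.inner hb).integral_prod_right

variable [μ.IsAddLeftInvariant] [μ.IsNegInvariant]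

theorem integrable_inner_comp_sub_left (hF : Integrable F μ) (hβ : AEStronglyMeasurable β μ)
    (hM : ∀ y, ‖β y‖ ≤ M) (x : G) : Integrable (fun y => ⟪F (x - y), β y⟫) μ :=
  ((hF.comp_sub_left x).norm.mul_const M).mono' ((hF.comp_sub_left x).aestronglyMeasurable.inner hβ)
    (.of_forall (norm_inner_comp_sub_left_le hM x))

theorem abs_innerConvolution_le_integral_norm_mul (hF : Integrable F μ) (hM : ∀ y, ‖β y‖ ≤ M)
    (x : G) : |innerConvolution μ F β x| ≤ (∫ z, ‖F z‖ ∂μ) * M := by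
  rw [← integral_sub_left_eq_self (fun z => ‖F z‖) μ x, ← integral_mul_const]
  exact norm_integral_le_of_norm_le ((hF.comp_sub_left x).norm.mul_const M)
    (.of_forall (norm_inner_comp_sub_left_le hM x))

theorem innerConvolution_sub (hF₁ : Integrable F₁ μ) (hF₂ : Integrable F₂ μ)
    (hβ : AEStronglyMeasurable β μ) (hM : ∀ y, ‖β y‖ ≤ M) (x : G) :
    innerConvolution μ (fun z => F₁ z - F₂ z) β x =
      innerConvolution μ F₁ β x - innerConvolution μ F₂ β x := by
  simp only [innerConvolution, inner_sub_left]
  exact integral_sub (integrable_inner_comp_sub_left hF₁ hβ hM x)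
    (integrable_inner_comp_sub_left hF₂ hβ hM x)

namespace HasL1RpowBound

theorem abs_innerConvolution_le (hK : HasL1RpowBound μ K A q) (hM : ∀ y, ‖β y‖ ≤ M) {s : ℝ}
    (hs : 0 < s) (x : G) : |innerConvolution μ (K s) β x| ≤ A * M * s ^ q :=
  calc |innerConvolution μ (K s) β x| ≤ (∫ z, ‖K s z‖ ∂μ) * M :=
        abs_innerConvolution_le_integral_norm_mul (hK.integrable hs) hM x
    _ ≤ A * s ^ q * M :=
        mul_le_mul_of_nonneg_right (hK.integral_norm_le hs) ((norm_nonneg _).trans (hM 0))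
    _ = A * M * s ^ q := by ring

theorem ae_norm_innerConvolution_le (hK : HasL1RpowBound μ K A q)
    (hM : ∀ τ ∈ Ioo 0 t, ∀ y, ‖b τ y‖ ≤ M) (x : G) :
    ∀ᵐ τ ∂volume.restrict (Ioc 0 t),
      ‖innerConvolution μ (K (t - τ)) (b τ) x‖ ≤ A * M * (t - τ) ^ q :=
  (ae_restrict_Ioc_mem_Ioo 0 t).mono fun τ hτ =>
    hK.abs_innerConvolution_le (hM τ hτ) (sub_pos.2 hτ.2) x

theorem abs_duhamel_le (hK : HasL1RpowBound μ K A q) (hq : -1 < q) (ht : 0 ≤ t)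
    (hM : ∀ τ ∈ Ioo 0 t, ∀ y, ‖b τ y‖ ≤ M) (x : G) :
    |duhamel μ K b t x| ≤ A * M * (t ^ (q + 1) / (q + 1)) :=
  calc |duhamel μ K b t x| ≤ ∫ τ in Ioc 0 t, A * M * (t - τ) ^ q :=
        norm_integral_le_of_norm_le ((integrableOn_sub_rpow ht hq).const_mul (A * M))
          (hK.ae_norm_innerConvolution_le hM x)
    _ = A * M * (t ^ (q + 1) / (q + 1)) := by
        rw [integral_const_mul, integral_sub_rpow ht hq, sub_zero]

variable [SFinite μ]

theorem integrableOn_innerConvolution (hK : HasL1RpowBound μ K A q)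
    (hKm : StronglyMeasurable (uncurry K)) (hb : StronglyMeasurable (uncurry b)) (hq : -1 < q)
    (ht : 0 ≤ t) (hM : ∀ τ ∈ Ioo 0 t, ∀ y, ‖b τ y‖ ≤ M) (x : G) :
    IntegrableOn (fun τ => innerConvolution μ (K (t - τ)) (b τ) x) (Ioc 0 t) :=
  ((integrableOn_sub_rpow ht hq).const_mul (A * M)).mono'
    (stronglyMeasurable_innerConvolution hKm hb t x).aestronglyMeasurable
    (hK.ae_norm_innerConvolution_le hM x)

theorem duhamel_sub (hK : HasL1RpowBound μ K A q) (hL : HasL1RpowBound μ L B r)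
    (hKm : StronglyMeasurable (uncurry K)) (hLm : StronglyMeasurable (uncurry L))
    (hb : StronglyMeasurable (uncurry b)) (hq : -1 < q) (hr : -1 < r) (ht : 0 ≤ t)
    (hM : ∀ τ ∈ Ioo 0 t, ∀ y, ‖b τ y‖ ≤ M) (x : G) :
    duhamel μ (fun s z => K s z - L s z) b t x = duhamel μ K b t x - duhamel μ L b t x := by
  rw [duhamel, duhamel, duhamel,
    ← integral_sub (hK.integrableOn_innerConvolution hKm hb hq ht hM x)
      (hL.integrableOn_innerConvolution hLm hb hr ht hM x)]
  refine integral_congr_ae ((ae_restrict_Ioc_mem_Ioo 0 t).mono fun τ hτ => ?_)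
  exact innerConvolution_sub (hK.integrable (sub_pos.2 hτ.2)) (hL.integrable (sub_pos.2 hτ.2))
    (hb.comp_measurable measurable_prodMk_left).aestronglyMeasurable (hM τ hτ) x

theorem duhamel_add_left (hK : HasL1RpowBound μ K A q) (hKm : StronglyMeasurable (uncurry K))
    (hb : StronglyMeasurable (uncurry b)) (hq : -1 < q) (ht : 0 ≤ t) (hd : 0 ≤ d)
    (hM : ∀ τ ∈ Ioo 0 (t + d), ∀ y, ‖b τ y‖ ≤ M) (x : G) :
    duhamel μ K b (t + d) x =
      duhamel μ (fun s => K (s + d)) b t x + duhamel μ K (fun τ => b (t + τ)) d x := by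
  have hint := hK.integrableOn_innerConvolution hKm hb hq (add_nonneg ht hd) hM x
  have hlate : ∫ τ in Ioc t (t + d), innerConvolution μ (K (t + d - τ)) (b τ) x =
      duhamel μ K (fun τ => b (t + τ)) d x := by
    rw [duhamel, ← intervalIntegral.integral_of_le (le_add_of_nonneg_right hd),
      ← intervalIntegral.integral_of_le hd]
    simpa [add_sub_add_left_eq_sub] using (intervalIntegral.integral_comp_add_left
      (fun τ => innerConvolution μ (K (t + d - τ)) (b τ) x) (a := 0) (b := d) t).symm
  rw [← hlate, duhamel, ← Ioc_union_Ioc_eq_Ioc ht (le_add_of_nonneg_right hd),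
    setIntegral_union (Ioc_disjoint_Ioc_of_le le_rfl) measurableSet_Ioc
      (hint.mono_set (Ioc_subset_Ioc_right (le_add_of_nonneg_right hd)))
      (hint.mono_set (Ioc_subset_Ioc_left ht))]
  simp only [duhamel, sub_add_eq_add_sub]

theorem abs_duhamel_add_right_sub_le (hK : HasL1RpowBound μ K A q) {h : G}
    (hΔ : HasL1RpowBound μ (fun s z => K s (z + h) - K s z) B r)
    (hKm : StronglyMeasurable (uncurry K)) (hb : StronglyMeasurable (uncurry b)) (hq : -1 < q)
    (hr : -1 < r) (ht : 0 ≤ t) (hM : ∀ τ ∈ Ioo 0 t, ∀ y, ‖b τ y‖ ≤ M) (x : G) :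
    |duhamel μ K b t (x + h) - duhamel μ K b t x| ≤ B * M * (t ^ (r + 1) / (r + 1)) := by
  have hKm' : StronglyMeasurable (uncurry fun s z => K s (z + h)) :=
    hKm.comp_measurable (g := fun p : ℝ × G => (p.1, p.2 + h)) (by fun_prop)
  rw [← duhamel_comp_add_right,
    ← (hK.comp_add_right h).duhamel_sub hK hKm' hKm hb hq hq ht hM x]
  exact hΔ.abs_duhamel_le hr ht hM x

theorem abs_duhamel_add_left_sub_le (hK : HasL1RpowBound μ K A q)
    (hΔ : HasL1RpowBound μ (fun s z => K (s + d) z - K s z) B r)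
    (hKm : StronglyMeasurable (uncurry K)) (hb : StronglyMeasurable (uncurry b)) (hq : -1 < q)
    (hq₀ : q ≤ 0) (hr : -1 < r) (ht : 0 ≤ t) (hd : 0 ≤ d)
    (hM : ∀ τ ∈ Ioo 0 (t + d), ∀ y, ‖b τ y‖ ≤ M) (x : G) :
    |duhamel μ K b (t + d) x - duhamel μ K b t x| ≤
      B * M * (t ^ (r + 1) / (r + 1)) + A * M * (d ^ (q + 1) / (q + 1)) := by
  have hKm' : StronglyMeasurable (uncurry fun s => K (s + d)) :=
    hKm.comp_measurable (g := fun p : ℝ × G => (p.1 + d, p.2)) (by fun_prop)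
  have hM_early : ∀ τ ∈ Ioo 0 t, ∀ y, ‖b τ y‖ ≤ M := fun τ hτ =>
    hM τ ⟨hτ.1, hτ.2.trans_le (le_add_of_nonneg_right hd)⟩
  have hM_late : ∀ τ ∈ Ioo 0 d, ∀ y, ‖b (t + τ) y‖ ≤ M := fun τ hτ =>
    hM (t + τ) ⟨add_pos_of_nonneg_of_pos ht hτ.1, by linarith [hτ.2]⟩
  have hsplit : duhamel μ K b (t + d) x - duhamel μ K b t x =
      duhamel μ (fun s z => K (s + d) z - K s z) b t x +
        duhamel μ K (fun τ => b (t + τ)) d x := by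
    rw [(hK.time_shift hq₀ hd).duhamel_sub hK hKm' hKm hb hq hq ht hM_early x,
      hK.duhamel_add_left hKm hb hq ht hd hM x]
    ring
  rw [hsplit]
  exact (abs_add_le _ _).trans (add_le_add (hΔ.abs_duhamel_le hr ht hM_early x)
    (hK.abs_duhamel_le hq hd hM_late x))

end HasL1RpowBound

end Duhamel

section Gaussian

variable {V : Type*} [NormedAddCommGroup V] [InnerProductSpace ℝ V] [FiniteDimensional ℝ V]
  [MeasurableSpace V] [BorelSpace V] {c : ℝ}

theorem integrable_exp_neg_mul_sq_norm (hc : 0 < c) :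
    Integrable fun v : V => Real.exp (-c * ‖v‖ ^ 2) :=
  .of_integral_ne_zero <| by
    rw [GaussianFourier.integral_rexp_neg_mul_sq_norm hc]
    positivity

theorem pow_mul_exp_neg_mul_sq_le (hc : 0 < c) (k : ℕ) {ρ : ℝ} (hρ : 0 ≤ ρ) :
    ρ ^ k * Real.exp (-c * ρ ^ 2) ≤
      k.factorial * Real.exp (1 / (2 * c)) * Real.exp (-(c / 2) * ρ ^ 2) := by
  have hpow : ρ ^ k ≤ k.factorial * Real.exp ρ :=
    (div_le_iff₀' (by positivity)).1 (Real.pow_div_factorial_le_exp ρ hρ k)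
  have hexp : ρ - c * ρ ^ 2 ≤ 1 / (2 * c) - c / 2 * ρ ^ 2 := by
    have hsq : 1 / (2 * c) - c / 2 * ρ ^ 2 - (ρ - c * ρ ^ 2) = (c * ρ - 1) ^ 2 / (2 * c) := by
      field_simp
      ring
    rw [← sub_nonneg, hsq]
    positivity
  calc ρ ^ k * Real.exp (-c * ρ ^ 2) ≤ k.factorial * Real.exp ρ * Real.exp (-c * ρ ^ 2) := by
        gcongr
    _ = k.factorial * Real.exp (ρ - c * ρ ^ 2) := by
        rw [mul_assoc, ← Real.exp_add, neg_mul, sub_eq_add_neg]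
    _ ≤ k.factorial * Real.exp (1 / (2 * c) - c / 2 * ρ ^ 2) := by gcongr
    _ = k.factorial * Real.exp (1 / (2 * c)) * Real.exp (-(c / 2) * ρ ^ 2) := by
        rw [sub_eq_add_neg, Real.exp_add, neg_mul, mul_assoc]

theorem integrable_norm_pow_mul_exp_neg_mul_sq_norm (hc : 0 < c) (k : ℕ) :
    Integrable fun v : V => ‖v‖ ^ k * Real.exp (-c * ‖v‖ ^ 2) := by
  refine ((integrable_exp_neg_mul_sq_norm (half_pos hc)).const_mul
    (k.factorial * Real.exp (1 / (2 * c)))).mono' (by fun_prop) (.of_forall fun v => ?_)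
  rw [Real.norm_of_nonneg (by positivity)]
  exact pow_mul_exp_neg_mul_sq_le hc k (norm_nonneg v)

theorem integrable_polynomial_norm_mul_exp_neg_mul_sq_norm (hc : 0 < c) (p : Polynomial ℝ) :
    Integrable fun v : V => p.eval ‖v‖ * Real.exp (-c * ‖v‖ ^ 2) := by
  simp only [Polynomial.eval_eq_sum_range, Finset.sum_mul, mul_assoc]
  exact integrable_finsetSum _ fun k _ =>
    (integrable_norm_pow_mul_exp_neg_mul_sq_norm hc k).const_mul _

end Gaussian

section HeatKernel

variable {n : ℕ}

theorem heatKernel_nonneg {s : ℝ} (hs : 0 ≤ s) (z : EuclideanSpace ℝ (Fin n)) :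
    0 ≤ heatKernel n s z := by
  unfold heatKernel
  positivity

theorem measurable_heatKernel :
    Measurable fun p : ℝ × EuclideanSpace ℝ (Fin n) => heatKernel n p.1 p.2 := by
  unfold heatKernel
  fun_prop

theorem heatKernel_eq_heatKernel_one {s : ℝ} (hs : 0 < s) (z : EuclideanSpace ℝ (Fin n)) :
    heatKernel n s z = (√s ^ n)⁻¹ * heatKernel n 1 ((√s)⁻¹ • z) := by
  have hpow : s ^ (-(n : ℝ) / 2) = (√s ^ n)⁻¹ := by
    rw [neg_div, Real.rpow_neg hs.le, ← Real.rpow_natCast, Real.sqrt_eq_rpow,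
      ← Real.rpow_mul hs.le]
    ring_nf
  have hexp : -‖(√s)⁻¹ • z‖ ^ 2 / (4 * 1) = -‖z‖ ^ 2 / (4 * s) := by
    rw [norm_smul, norm_inv, Real.norm_of_nonneg (Real.sqrt_nonneg s), mul_pow, inv_pow,
      Real.sq_sqrt hs.le]
    field_simp
  rw [heatKernel, heatKernel, hexp, Real.mul_rpow (by positivity) hs.le, hpow, mul_one]
  ring

theorem integrable_heatKernel_one_mul_polynomial_norm (p : Polynomial ℝ) :
    Integrable fun z : EuclideanSpace ℝ (Fin n) => heatKernel n 1 z * p.eval ‖z‖ := by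
  refine ((integrable_polynomial_norm_mul_exp_neg_mul_sq_norm (c := 1 / 4) (by norm_num)
    p).const_mul ((4 * Real.pi * 1) ^ (-(n : ℝ) / 2))).congr (.of_forall fun z => ?_)
  simp only [heatKernel, mul_one]
  ring_nf

theorem hasL1RpowBound_of_norm_le_heatKernel {W : Type*} [NormedAddCommGroup W]
    {K : ℝ → EuclideanSpace ℝ (Fin n) → W} {q : ℝ} (p : Polynomial ℝ)
    (hmeas : ∀ {s}, 0 < s → AEStronglyMeasurable (K s))
    (hle : ∀ {s}, 0 < s → ∀ z, ‖K s z‖ ≤ s ^ q * (heatKernel n s z * p.eval (‖z‖ / √s))) :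
    HasL1RpowBound volume K (∫ w, heatKernel n 1 w * p.eval ‖w‖) q := by
  refine .of_norm_le_comp_inv_sqrt_smul (integrable_heatKernel_one_mul_polynomial_norm p) hmeas
    fun {s} hs z => (hle hs z).trans_eq ?_
  rw [heatKernel_eq_heatKernel_one hs, finrank_euclideanSpace_fin, norm_smul, norm_inv,
    Real.norm_of_nonneg (Real.sqrt_nonneg s), div_eq_inv_mul]
  ring

theorem hasFDerivAt_heatKernel (s : ℝ) (z : EuclideanSpace ℝ (Fin n)) :
    HasFDerivAt (heatKernel n s) (-(heatKernel n s z / (2 * s)) • innerSL ℝ z) z := by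
  have hexponent : HasFDerivAt (fun z : EuclideanSpace ℝ (Fin n) => -‖z‖ ^ 2 / (4 * s))
      (-(4 * s)⁻¹ • (2 • innerSL ℝ z)) z := by
    refine ((hasStrictFDerivAt_norm_sq z).hasFDerivAt.const_mul (-(4 * s)⁻¹)).congr_of_eventuallyEq
      (.of_forall fun z => ?_)
    change -‖z‖ ^ 2 / (4 * s) = -(4 * s)⁻¹ * ‖z‖ ^ 2
    ring
  refine (hexponent.exp.const_mul ((4 * Real.pi * s) ^ (-(n : ℝ) / 2))).congr_fderiv ?_
  simp only [heatKernel, ← Nat.cast_smul_eq_nsmul ℝ, smul_smul]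
  congr 1
  push_cast
  ring

theorem gradient_heatKernel (s : ℝ) (z : EuclideanSpace ℝ (Fin n)) :
    gradient (heatKernel n s) z = -(heatKernel n s z / (2 * s)) • z := by
  refine HasGradientAt.gradient (hasGradientAt_iff_hasFDerivAt.2 ?_)
  exact (hasFDerivAt_heatKernel s z).congr_fderiv (by ext; simp)

theorem stronglyMeasurable_gradient_heatKernel :
    StronglyMeasurable (uncurry fun s => gradient (heatKernel n s)) := by
  have hmeas := measurable_heatKernel (n := n)
  simp only [uncurry_def, gradient_heatKernel]
  exact Measurable.stronglyMeasurable (by fun_prop)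

theorem exists_hasL1RpowBound_gradient_heatKernel (n : ℕ) :
    ∃ A, HasL1RpowBound volume (fun s => gradient (heatKernel n s)) A (-1 / 2) := by
  refine ⟨_, hasL1RpowBound_of_norm_le_heatKernel (.C (1 / 2) * .X) (fun {s} _ =>
    (stronglyMeasurable_gradient_heatKernel.comp_measurable
      measurable_prodMk_left).aestronglyMeasurable) fun {s} hs z => le_of_eq ?_⟩
  have hpow : s ^ (-1 / 2 : ℝ) = (√s)⁻¹ := by
    rw [Real.sqrt_eq_rpow, ← Real.rpow_neg hs.le, neg_div]
  rw [gradient_heatKernel, norm_smul, norm_neg,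
    Real.norm_of_nonneg (div_nonneg (heatKernel_nonneg hs.le z) (by positivity)), hpow]
  simp only [Polynomial.eval_mul, Polynomial.eval_C, Polynomial.eval_X]
  obtain ⟨σ, hσ, rfl⟩ : ∃ σ, 0 < σ ∧ σ ^ 2 = s := ⟨√s, Real.sqrt_pos.2 hs, Real.sq_sqrt hs.le⟩
  rw [Real.sqrt_sq hσ.le]
  field_simp

theorem hasFDerivAt_gradient_heatKernel (s : ℝ) (z : EuclideanSpace ℝ (Fin n)) :
    HasFDerivAt (gradient (heatKernel n s))
      (heatKernel n s z • ((1 / (4 * s ^ 2)) • (innerSL ℝ z).smulRight z -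
        (1 / (2 * s)) • ContinuousLinearMap.id ℝ (EuclideanSpace ℝ (Fin n)))) z := by
  rw [funext (gradient_heatKernel s)]
  refine ((((hasFDerivAt_heatKernel s z).mul_const (2 * s)⁻¹).neg).smul
    (hasFDerivAt_id z)).congr_fderiv ?_
  ext1 v
  simp only [mul_inv_rev, Pi.neg_apply, neg_smul, smul_neg, neg_neg, id_eq, add_apply, neg_apply,
    smul_apply, ContinuousLinearMap.id_apply, ContinuousLinearMap.smulRight_apply,
    coe_innerSL_apply, smul_eq_mul, one_div, sub_apply]
  module

theorem norm_fderiv_gradient_heatKernel_le {s : ℝ} (hs : 0 < s)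
    (z : EuclideanSpace ℝ (Fin n)) :
    ‖fderiv ℝ (gradient (heatKernel n s)) z‖ ≤
      heatKernel n s z * (‖z‖ ^ 2 / (4 * s ^ 2) + 1 / (2 * s)) := by
  have hrankOne : ‖(innerSL ℝ z).smulRight z‖ = ‖z‖ ^ 2 := by
    rw [ContinuousLinearMap.norm_smulRight_apply, innerSL_apply_norm, sq]
  rw [(hasFDerivAt_gradient_heatKernel s z).fderiv, norm_smul,
    Real.norm_of_nonneg (heatKernel_nonneg hs.le z)]
  refine mul_le_mul_of_nonneg_left ((norm_sub_le _ _).trans (add_le_add ?_ ?_))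
    (heatKernel_nonneg hs.le z)
  · rw [norm_smul, hrankOne, Real.norm_of_nonneg (by positivity), one_div_mul_eq_div]
  · rw [norm_smul, Real.norm_of_nonneg (by positivity)]
    exact mul_le_of_le_one_right (by positivity) ContinuousLinearMap.norm_id_le

theorem exists_hasL1RpowBound_fderiv_gradient_heatKernel (n : ℕ) :
    ∃ A, HasL1RpowBound volume (fun s => fderiv ℝ (gradient (heatKernel n s))) A (-1) := by
  refine ⟨_, hasL1RpowBound_of_norm_le_heatKernel (.C (1 / 4) * .X ^ 2 + .C (1 / 2))
    (fun _ => (measurable_fderiv ℝ _).aestronglyMeasurable)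
    fun {s} hs z => (norm_fderiv_gradient_heatKernel_le hs z).trans_eq ?_⟩
  simp only [Polynomial.eval_add, Polynomial.eval_mul, Polynomial.eval_pow, Polynomial.eval_C,
    Polynomial.eval_X, div_pow, Real.sq_sqrt hs.le, Real.rpow_neg_one]
  field_simp

/-- The time derivative of the heat kernel gradient, from `∂ₛΓ = Γ (|z|² / (4s²) - n / (2s))` and
`∇Γ = -Γ z / (2s)`. -/
def gradientHeatKernelTimeDeriv (n : ℕ) (s : ℝ) (z : EuclideanSpace ℝ (Fin n)) :
    EuclideanSpace ℝ (Fin n) :=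
  (heatKernel n s z * ((n + 2) / (4 * s ^ 2) - ‖z‖ ^ 2 / (8 * s ^ 3))) • z

theorem stronglyMeasurable_gradientHeatKernelTimeDeriv :
    StronglyMeasurable (uncurry (gradientHeatKernelTimeDeriv n)) := by
  have hmeas := measurable_heatKernel (n := n)
  unfold gradientHeatKernelTimeDeriv uncurry
  exact Measurable.stronglyMeasurable (by fun_prop)

theorem hasDerivAt_heatKernel_time {s : ℝ} (hs : 0 < s) (z : EuclideanSpace ℝ (Fin n)) :
    HasDerivAt (heatKernel n · z)
      (heatKernel n s z * (‖z‖ ^ 2 / (4 * s ^ 2) - n / (2 * s))) s := by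
  have hpow : HasDerivAt (fun s : ℝ => (4 * Real.pi * s) ^ (-(n : ℝ) / 2))
      (-n / (2 * s) * (4 * Real.pi * s) ^ (-(n : ℝ) / 2)) s := by
    have h := ((hasDerivAt_id s).const_mul (4 * Real.pi)).rpow_const (p := -(n : ℝ) / 2)
      (Or.inl (by simp only [id]; positivity))
    refine h.congr_deriv ?_
    rw [Real.rpow_sub_one (by simp only [id]; positivity)]
    simp only [id]
    field_simp
  have hexponent : HasDerivAt (fun s : ℝ => -‖z‖ ^ 2 / (4 * s)) (‖z‖ ^ 2 / (4 * s ^ 2)) s := by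
    refine ((((hasDerivAt_id s).const_mul 4).inv (by simp only [id]; positivity)).const_mul
      (-‖z‖ ^ 2)).congr_deriv ?_
    simp only [id]
    field_simp
  refine (hpow.mul hexponent.exp).congr_deriv ?_
  rw [heatKernel]
  ring

theorem hasDerivAt_gradient_heatKernel_time {s : ℝ} (hs : 0 < s)
    (z : EuclideanSpace ℝ (Fin n)) :
    HasDerivAt (fun s => gradient (heatKernel n s) z) (gradientHeatKernelTimeDeriv n s z) s := by
  simp only [gradient_heatKernel]
  refine (((hasDerivAt_heatKernel_time hs z).div ((hasDerivAt_id s).const_mul 2)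
    (by simp only [id]; positivity)).neg.smul_const z).congr_deriv ?_
  rw [gradientHeatKernelTimeDeriv]
  congr 1
  simp only [id]
  field_simp
  ring

theorem norm_gradientHeatKernelTimeDeriv_le {s : ℝ} (hs : 0 < s)
    (z : EuclideanSpace ℝ (Fin n)) :
    ‖gradientHeatKernelTimeDeriv n s z‖ ≤
      heatKernel n s z * ((n + 2) / (4 * s ^ 2) + ‖z‖ ^ 2 / (8 * s ^ 3)) * ‖z‖ := by
  have hΓ := heatKernel_nonneg hs.le z
  rw [gradientHeatKernelTimeDeriv, norm_smul, norm_mul, Real.norm_of_nonneg hΓ]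
  gcongr
  refine (norm_sub_le _ _).trans_eq ?_
  rw [Real.norm_of_nonneg (by positivity), Real.norm_of_nonneg (by positivity)]

theorem exists_hasL1RpowBound_gradientHeatKernelTimeDeriv (n : ℕ) :
    ∃ A, HasL1RpowBound volume (gradientHeatKernelTimeDeriv n) A (-3 / 2) := by
  refine ⟨_, hasL1RpowBound_of_norm_le_heatKernel
    (.C ((n + 2) / 4) * .X + .C (1 / 8) * .X ^ 3) (fun {s} _ =>
    (stronglyMeasurable_gradientHeatKernelTimeDeriv.comp_measurable
      measurable_prodMk_left).aestronglyMeasurable)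
    fun {s} hs z => (norm_gradientHeatKernelTimeDeriv_le hs z).trans_eq ?_⟩
  have hpow : s ^ (-3 / 2 : ℝ) = (√s ^ 3)⁻¹ := by
    rw [Real.sqrt_eq_rpow, ← Real.rpow_natCast, ← Real.rpow_mul hs.le, ← Real.rpow_neg hs.le]
    norm_num
  simp only [Polynomial.eval_add, Polynomial.eval_mul, Polynomial.eval_pow, Polynomial.eval_C,
    Polynomial.eval_X, hpow]
  obtain ⟨σ, hσ, rfl⟩ : ∃ σ, 0 < σ ∧ σ ^ 2 = s := ⟨√s, Real.sqrt_pos.2 hs, Real.sq_sqrt hs.le⟩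
  rw [Real.sqrt_sq hσ.le]
  field_simp

theorem exists_hasL1RpowBound_gradient_heatKernel_comp_add_right_sub (n : ℕ) {α : ℝ}
    (hα : α ∈ Icc (0 : ℝ) 1) :
    ∃ B, 0 ≤ B ∧ ∀ h : EuclideanSpace ℝ (Fin n), HasL1RpowBound volume
      (fun s z => gradient (heatKernel n s) (z + h) - gradient (heatKernel n s) z)
      (B * ‖h‖ ^ α) (-(1 + α) / 2) := by
  obtain ⟨A, hA⟩ := exists_hasL1RpowBound_gradient_heatKernel n
  obtain ⟨B, hB⟩ := exists_hasL1RpowBound_fderiv_gradient_heatKernel n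
  have hA₀ := hA.nonneg
  have hB₀ := hB.nonneg
  refine ⟨(2 * A) ^ (1 - α) * B ^ α, by positivity, fun h => ?_⟩
  have hexponent : -(1 + α) / 2 = (1 - α) * (-1 / 2) + α * (-1) := by ring
  rw [hexponent]
  exact hA.comp_add_right_sub_rpow hB
    (fun {s} _ z => (hasFDerivAt_gradient_heatKernel s z).differentiableAt.hasFDerivAt)
    (fun _ => (measurable_fderiv ℝ _).stronglyMeasurable) hα h

theorem exists_hasL1RpowBound_gradient_heatKernel_time_shift_sub (n : ℕ) {α : ℝ}
    (hα : α ∈ Icc (0 : ℝ) 2) :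
    ∃ B, 0 ≤ B ∧ ∀ d, 0 ≤ d → HasL1RpowBound volume
      (fun s z => gradient (heatKernel n (s + d)) z - gradient (heatKernel n s) z)
      (B * d ^ (α / 2)) (-(1 + α) / 2) := by
  obtain ⟨A, hA⟩ := exists_hasL1RpowBound_gradient_heatKernel n
  obtain ⟨B, hB⟩ := exists_hasL1RpowBound_gradientHeatKernelTimeDeriv n
  have hA₀ := hA.nonneg
  have hB₀ := hB.nonneg
  refine ⟨(2 * A) ^ (1 - α / 2) * B ^ (α / 2), by positivity, fun d hd => ?_⟩
  have hexponent : -(1 + α) / 2 = (1 - α / 2) * (-1 / 2) + α / 2 * (-3 / 2) := by ring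
  rw [hexponent]
  exact hA.time_shift_sub_rpow hB (by norm_num) (by norm_num)
    hasDerivAt_gradient_heatKernel_time stronglyMeasurable_gradientHeatKernelTimeDeriv
    ⟨by linarith [hα.1], by linarith [hα.2]⟩ hd

/-- The potential `v` of the divergence-form source `b`: the Duhamel potential with respect to
the kernel `∇Γ`. -/
abbrev heatGradientPotential (n : ℕ) (b : ℝ → EuclideanSpace ℝ (Fin n) → EuclideanSpace ℝ (Fin n)) :
    ℝ → EuclideanSpace ℝ (Fin n) → ℝ :=
  duhamel volume (fun s => gradient (heatKernel n s)) b

theorem exists_abs_heatGradientPotential_le (n : ℕ) :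
    ∃ C, 0 ≤ C ∧ ∀ {b t M}, 0 ≤ t → (∀ τ ∈ Ioo 0 t, ∀ y, ‖b τ y‖ ≤ M) →
      ∀ x, |heatGradientPotential n b t x| ≤ C * t ^ (1 / 2 : ℝ) * M := by
  obtain ⟨A, hA⟩ := exists_hasL1RpowBound_gradient_heatKernel n
  have hexponent : (-1 / 2 + 1 : ℝ) = 1 / 2 := by norm_num
  refine ⟨2 * A, mul_nonneg zero_le_two hA.nonneg, fun ht hM x =>
    (hA.abs_duhamel_le (by norm_num) ht hM x).trans_eq ?_⟩
  rw [hexponent]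
  ring

theorem exists_abs_heatGradientPotential_sub_le (n : ℕ) {α : ℝ} (hα : α ∈ Ico (0 : ℝ) 1) :
    ∃ C, 0 ≤ C ∧ ∀ {b t M}, StronglyMeasurable (uncurry b) → 0 ≤ t →
      (∀ τ ∈ Ioo 0 t, ∀ y, ‖b τ y‖ ≤ M) → ∀ x x',
      |heatGradientPotential n b t x' - heatGradientPotential n b t x| ≤
        C * t ^ ((1 - α) / 2) * ‖x' - x‖ ^ α * M := by
  obtain ⟨A, hA⟩ := exists_hasL1RpowBound_gradient_heatKernel n
  obtain ⟨B, hB₀, hB⟩ := exists_hasL1RpowBound_gradient_heatKernel_comp_add_right_sub n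
    (Ico_subset_Icc_self hα)
  have hp : 0 < (1 - α) / 2 := half_pos (sub_pos.2 hα.2)
  have hexponent : -(1 + α) / 2 + 1 = (1 - α) / 2 := by ring
  refine ⟨B / ((1 - α) / 2), by positivity, fun {b t M} hb ht hM x x' => ?_⟩
  have h := hA.abs_duhamel_add_right_sub_le (hB (x' - x))
    stronglyMeasurable_gradient_heatKernel hb (by norm_num) (by linarith) ht hM x
  rw [add_sub_cancel, hexponent] at h
  exact h.trans_eq (by ring)

theorem exists_abs_heatGradientPotential_time_sub_le (n : ℕ) {α : ℝ} (hα : α ∈ Ico (0 : ℝ) 1) :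
    ∃ C, 0 ≤ C ∧ ∀ {b t t' M}, StronglyMeasurable (uncurry b) → 0 ≤ t → t < t' →
      (∀ τ ∈ Ioo 0 t', ∀ y, ‖b τ y‖ ≤ M) → ∀ x,
      |heatGradientPotential n b t' x - heatGradientPotential n b t x| ≤
        C * t' ^ ((1 - α) / 2) * (t' - t) ^ (α / 2) * M := by
  obtain ⟨A, hA⟩ := exists_hasL1RpowBound_gradient_heatKernel n
  obtain ⟨B, hB₀, hB⟩ := exists_hasL1RpowBound_gradient_heatKernel_time_shift_sub n
    (α := α) ⟨hα.1, hα.2.le.trans one_le_two⟩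
  have hA₀ := hA.nonneg
  have hp : 0 < (1 - α) / 2 := half_pos (sub_pos.2 hα.2)
  have hexponent : -(1 + α) / 2 + 1 = (1 - α) / 2 := by ring
  refine ⟨B / ((1 - α) / 2) + 2 * A, by positivity, fun {b t t' M} hb ht htt' hM x => ?_⟩
  have hd : 0 < t' - t := sub_pos.2 htt'
  have hM₀ : 0 ≤ M :=
    (norm_nonneg _).trans (hM ((t + t') / 2) ⟨by linarith, by linarith⟩ 0)
  have hsqrt : (t' - t) ^ (-1 / 2 + 1 : ℝ) = (t' - t) ^ ((1 - α) / 2) * (t' - t) ^ (α / 2) := by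
    rw [← Real.rpow_add hd]
    ring_nf
  have h := hA.abs_duhamel_add_left_sub_le (hB (t' - t) hd.le)
    stronglyMeasurable_gradient_heatKernel hb (by norm_num) (by norm_num) (by linarith) ht hd.le
    (by rwa [add_sub_cancel]) x
  rw [add_sub_cancel, hexponent, hsqrt] at h
  calc |heatGradientPotential n b t' x - heatGradientPotential n b t x|
      ≤ (B / ((1 - α) / 2) * t ^ ((1 - α) / 2) + 2 * A * (t' - t) ^ ((1 - α) / 2)) *
        (t' - t) ^ (α / 2) * M := h.trans_eq (by ring)
    _ ≤ (B / ((1 - α) / 2) * t' ^ ((1 - α) / 2) + 2 * A * t' ^ ((1 - α) / 2)) *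
        (t' - t) ^ (α / 2) * M := by gcongr; linarith
    _ = (B / ((1 - α) / 2) + 2 * A) * t' ^ ((1 - α) / 2) * (t' - t) ^ (α / 2) * M := by ring

end HeatKernel

/-- **Estimates for the Duhamel term with a gradient (divergence-form) source `b`**:
with `v(t,x) = ∫₀^t ∫ ∇Γ(t-τ, x-y)·b(τ,y) dy dτ`, one has the sup, spatial Hölder
and time Hölder bounds (i)–(iii). -/
theorem statement12 (n : ℕ) (hn : 1 ≤ n) (α : ℝ) (hα : α ∈ Set.Ioo (0 : ℝ) 1) :
    ∃ C : ℝ, 0 < C ∧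
      ∀ T : ℝ, 0 < T →
      ∀ b : ℝ → EuclideanSpace ℝ (Fin n) → EuclideanSpace ℝ (Fin n),
        Measurable (fun q : ℝ × EuclideanSpace ℝ (Fin n) => b q.1 q.2) →
      ∀ M : ℝ, (∀ τ ∈ Set.Icc (0 : ℝ) T, ∀ y, ‖b τ y‖ ≤ M) →
      ∀ v : ℝ → EuclideanSpace ℝ (Fin n) → ℝ,
        (∀ t x, v t x = ∫ τ in Set.Ioc (0 : ℝ) t, ∫ y,
          ⟪gradient (heatKernel n (t - τ)) (x - y), b τ y⟫) →
        (∀ t : ℝ, 0 < t → t ≤ T → ∀ x, |v t x| ≤ C * t ^ ((1 : ℝ) / 2) * M) ∧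
        (∀ t : ℝ, 0 < t → t ≤ T → ∀ x x',
          |v t x' - v t x| ≤ C * T ^ ((1 - α) / 2) * ‖x' - x‖ ^ α * M) ∧
        (∀ t t' : ℝ, 0 ≤ t → t < t' → t' ≤ T → ∀ x,
          |v t' x - v t x| ≤ C * T ^ ((1 - α) / 2) * (t' - t) ^ (α / 2) * M) := by
  obtain ⟨C₁, hC₁, hsup⟩ := exists_abs_heatGradientPotential_le n
  obtain ⟨C₂, hC₂, hspace⟩ := exists_abs_heatGradientPotential_sub_le n (Ioo_subset_Ico_self hα)
  obtain ⟨C₃, hC₃, htime⟩ :=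
    exists_abs_heatGradientPotential_time_sub_le n (Ioo_subset_Ico_self hα)
  refine ⟨C₁ + C₂ + C₃ + 1, by positivity, fun T hT b hb M hM v hv => ?_⟩
  obtain rfl : v = heatGradientPotential n b := funext₂ hv
  have hM₀ : 0 ≤ M := (norm_nonneg _).trans (hM 0 ⟨le_rfl, hT.le⟩ 0)
  have hp : 0 ≤ (1 - α) / 2 := by linarith [hα.2]
  have hM_Ioo {t : ℝ} (htT : t ≤ T) : ∀ τ ∈ Ioo 0 t, ∀ y, ‖b τ y‖ ≤ M := fun τ hτ =>
    hM τ ⟨hτ.1.le, hτ.2.le.trans htT⟩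
  refine ⟨fun t ht htT x => (hsup ht.le (hM_Ioo htT) x).trans ?_,
    fun t ht htT x x' => (hspace hb.stronglyMeasurable ht.le (hM_Ioo htT) x x').trans ?_,
    fun t t' ht htt' htT x => (htime hb.stronglyMeasurable ht htt' (hM_Ioo htT) x).trans ?_⟩
  · gcongr
    linarith
  · gcongr
    linarith
  · have ht' := ht.trans htt'.le
    gcongr
    linarith
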